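/- Let H be a quasi-Hopf algebra, B a right H-comodule algebra, and v : H → B a morphism of right H-comodule algebras. Define E : B → B by E(b) = v(q¹)b₍₀₎v(βS(q²b₍₁₎)), set A = E(B) and h▷b = E(v(h)b). Then for all a ∈ A and h ∈ H: ρ(a v(h)) = (x¹▷a)v(x²h₁) ⊗ x³h₂, where Φ⁻¹ = x¹⊗x²⊗x³; that is, the map Ψ : A#H → B, Ψ(a#h) = a v(h), satisfies ρ∘Ψ = (Ψ⊗id)∘ρ_{A#H}, where ρ_{A#H}(a#h) = (x¹▷a # x²h₁)⊗x³h₂. -/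

import Mathlib

open TensorProduct BigOperators

/-- A quasi-bialgebra in the sense of Drinfeld. -/
structure QuasiBialgebra (k H : Type*) [Field k] [Ring H] [Algebra k H] where
  comul : H →ₐ[k] H ⊗[k] H
  counit : H →ₐ[k] k
  Phi : H ⊗[k] (H ⊗[k] H)
  PhiInv : H ⊗[k] (H ⊗[k] H)
  Phi_mul_inv : Phi * PhiInv = 1
  inv_mul_Phi : PhiInv * Phi = 1
  comul_coassoc : ∀ h : H,
    (Algebra.TensorProduct.map (AlgHom.id k H) comul) (comul h)
      = Phi * (Algebra.TensorProduct.assoc k k k H H H)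
          ((Algebra.TensorProduct.map comul (AlgHom.id k H)) (comul h)) * PhiInv
  counit_comul_right : ∀ h : H,
    (Algebra.TensorProduct.map (AlgHom.id k H) counit) (comul h) = h ⊗ₜ[k] (1 : k)
  counit_comul_left : ∀ h : H,
    (Algebra.TensorProduct.map counit (AlgHom.id k H)) (comul h) = (1 : k) ⊗ₜ[k] h
  pentagon :
    ((1 : H) ⊗ₜ[k] Phi)
      * (Algebra.TensorProduct.map (AlgHom.id k H)
          (((Algebra.TensorProduct.assoc k k k H H H).toAlgHom).comp
            (Algebra.TensorProduct.map comul (AlgHom.id k H)))) Phi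
      * (Algebra.TensorProduct.map (AlgHom.id k H)
          (Algebra.TensorProduct.map (AlgHom.id k H)
            (Algebra.TensorProduct.includeLeft : H →ₐ[k] H ⊗[k] H))) Phi
    = (Algebra.TensorProduct.map (AlgHom.id k H)
          (Algebra.TensorProduct.map (AlgHom.id k H) comul)) Phi
      * (Algebra.TensorProduct.assoc k k k H H (H ⊗[k] H))
          ((Algebra.TensorProduct.map comul (AlgHom.id k (H ⊗[k] H))) Phi)
  counit_Phi : (Algebra.TensorProduct.map (AlgHom.id k H)
      (Algebra.TensorProduct.map counit (AlgHom.id k H))) Phi = 1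

/-- A quasi-Hopf algebra: a quasi-bialgebra with antipode `S` (a bijective algebra
anti-automorphism with inverse `Sinv`) and elements `alpha`, `beta`, normalized so that
`counit alpha = counit beta = 1`.  Identities involving Sweedler components are stated
universally over all finite representations of the relevant tensors. -/
structure QuasiHopfAlgebra (k H : Type*) [Field k] [Ring H] [Algebra k H] extends
    QuasiBialgebra k H where
  alpha : H
  beta : H
  S : H →ₗ[k] H
  Sinv : H →ₗ[k] H
  S_one : S 1 = 1
  S_mul : ∀ a b : H, S (a * b) = S b * S a
  Sinv_S : ∀ h : H, Sinv (S h) = h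
  S_Sinv : ∀ h : H, S (Sinv h) = h
  antipode_left : ∀ h : H, ∀ (n : ℕ) (d1 d2 : Fin n → H),
    comul h = ∑ i, d1 i ⊗ₜ[k] d2 i →
    ∑ i, S (d1 i) * alpha * d2 i = counit h • alpha
  antipode_right : ∀ h : H, ∀ (n : ℕ) (d1 d2 : Fin n → H),
    comul h = ∑ i, d1 i ⊗ₜ[k] d2 i →
    ∑ i, d1 i * beta * S (d2 i) = counit h • beta
  antipode_Phi : ∀ (n : ℕ) (X1 X2 X3 : Fin n → H),
    Phi = ∑ i, X1 i ⊗ₜ[k] (X2 i ⊗ₜ[k] X3 i) →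
    ∑ i, X1 i * beta * S (X2 i) * alpha * X3 i = 1
  antipode_PhiInv : ∀ (n : ℕ) (x1 x2 x3 : Fin n → H),
    PhiInv = ∑ i, x1 i ⊗ₜ[k] (x2 i ⊗ₜ[k] x3 i) →
    ∑ i, S (x1 i) * alpha * x2 i * beta * S (x3 i) = 1
  counit_alpha : counit alpha = 1
  counit_beta : counit beta = 1
/-- A right `H`-comodule algebra over a quasi-bialgebra `Q`. -/
structure RightComoduleAlgebra {k H : Type*} [Field k] [Ring H] [Algebra k H]
    (Q : QuasiBialgebra k H) (B : Type*) [Ring B] [Algebra k B] where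
  coact : B →ₐ[k] B ⊗[k] H
  PhiRho : B ⊗[k] (H ⊗[k] H)
  PhiRhoInv : B ⊗[k] (H ⊗[k] H)
  PhiRho_mul_inv : PhiRho * PhiRhoInv = 1
  inv_mul_PhiRho : PhiRhoInv * PhiRho = 1
  coact_coassoc : ∀ b : B,
    PhiRho * (Algebra.TensorProduct.assoc k k k B H H)
        ((Algebra.TensorProduct.map coact (AlgHom.id k H)) (coact b))
      = (Algebra.TensorProduct.map (AlgHom.id k B) Q.comul) (coact b) * PhiRho
  pentagon :
    ((1 : B) ⊗ₜ[k] Q.Phi)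
      * (Algebra.TensorProduct.map (AlgHom.id k B)
          (((Algebra.TensorProduct.assoc k k k H H H).toAlgHom).comp
            (Algebra.TensorProduct.map Q.comul (AlgHom.id k H)))) PhiRho
      * (Algebra.TensorProduct.map (AlgHom.id k B)
          (Algebra.TensorProduct.map (AlgHom.id k H)
            (Algebra.TensorProduct.includeLeft : H →ₐ[k] H ⊗[k] H))) PhiRho
    = (Algebra.TensorProduct.map (AlgHom.id k B)
          (Algebra.TensorProduct.map (AlgHom.id k H) Q.comul)) PhiRho
      * (Algebra.TensorProduct.assoc k k k B H (H ⊗[k] H))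
          ((Algebra.TensorProduct.map coact (AlgHom.id k (H ⊗[k] H))) PhiRho)
  counit_coact : ∀ b : B,
    (Algebra.TensorProduct.map (AlgHom.id k B) Q.counit) (coact b) = b ⊗ₜ[k] (1 : k)
  counit_PhiRho_mid : (Algebra.TensorProduct.map (AlgHom.id k B)
      (Algebra.TensorProduct.map Q.counit (AlgHom.id k H))) PhiRho = 1
  counit_PhiRho_right : (Algebra.TensorProduct.map (AlgHom.id k B)
      (Algebra.TensorProduct.map (AlgHom.id k H) Q.counit)) PhiRho = 1

/-- `v : H → B` is a morphism of right `H`-comodule algebras from `H` (with its canonical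
right `H`-comodule algebra structure `ρ = Δ`, `Φ_ρ = Φ`) to `B`. -/
def IsComodAlgMorphismFromH {k H B : Type*} [Field k] [Ring H] [Algebra k H]
    [Ring B] [Algebra k B] {Q : QuasiBialgebra k H}
    (R : RightComoduleAlgebra Q B) (v : H →ₐ[k] B) : Prop :=
  (∀ h : H, R.coact (v h) = (Algebra.TensorProduct.map v (AlgHom.id k H)) (Q.comul h))
  ∧ R.PhiRho = (Algebra.TensorProduct.map v (AlgHom.id k (H ⊗[k] H))) Q.Phi

/-- Characterization of the canonical projection `E : B → B`,
`E(b) = v(q¹) b₍₀₎ v(β S(q² b₍₁₎))`, where `q_R = q¹ ⊗ q² = X¹ ⊗ S⁻¹(α X³) X²`,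
stated universally over finite representations of `Φ` and of `ρ(b)`. -/
def IsCanonicalProjection {k H B : Type*} [Field k] [Ring H] [Algebra k H]
    [Ring B] [Algebra k B] (Q : QuasiHopfAlgebra k H)
    (R : RightComoduleAlgebra Q.toQuasiBialgebra B) (v : H →ₐ[k] B) (E : B →ₗ[k] B) : Prop :=
  ∀ (b : B) (n : ℕ) (X1 X2 X3 : Fin n → H),
    Q.Phi = ∑ i, X1 i ⊗ₜ[k] (X2 i ⊗ₜ[k] X3 i) →
    ∀ (p : ℕ) (b0 : Fin p → B) (b1 : Fin p → H),
      R.coact b = ∑ j, b0 j ⊗ₜ[k] b1 j →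
      E b = ∑ i, ∑ j,
        v (X1 i) * b0 j * v (Q.beta * Q.S (Q.Sinv (Q.alpha * X3 i) * X2 i * b1 j))

/-!
Suppose `σ : B → A` is an algebra map and `F : B → A` a linear map with `F(1) = 1`,
`F(b v(h)) = ε(h) F(b)` and `F(c₍₀₎ b) σ(v(c₍₁₎)) = σ(c) F(b)`. Then `F = σ ∘ E`: the third property
rewrites `σ(E(b))` as an expression in `F` and `(ρ ⊗ id ⊗ id)(Φ_ρ (ρ(b) ⊗ 1))`, the pentagon moves
`ρ(b)` to the left legs, and the first two properties together with the antipode laws make every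
reassociator cancel.

The map `b ↦ E(x_ρ¹ b) v(x_ρ²) ⊗ x_ρ³` has these properties for `σ = ρ`, so it is `ρ ∘ E`. As
`E(c E(b)) = E(c b)`, it sends `b` to `(x¹ ▷ a) v(x²) ⊗ x³` where `a = E(b)`; multiplying this value
of `ρ(a)` by `ρ(v(h)) = v(h₁) ⊗ h₂` gives the claim.
-/

section Tensor

variable {k L M N : Type*} [CommSemiring k] [AddCommMonoid L] [Module k L]
  [AddCommMonoid M] [Module k M] [AddCommMonoid N] [Module k N]

theorem exists_eq_sum_tmul (t : L ⊗[k] M) :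
    ∃ (n : ℕ) (a : Fin n → L) (b : Fin n → M), t = ∑ i, a i ⊗ₜ[k] b i := by
  obtain ⟨s, rfl⟩ := TensorProduct.exists_finset t
  refine ⟨s.card, fun i => (s.equivFin.symm i).1.1, fun i => (s.equivFin.symm i).1.2, ?_⟩
  rw [← s.sum_coe_sort]
  exact (Equiv.sum_comp s.equivFin.symm fun p : s => p.1.1 ⊗ₜ[k] p.1.2).symm

theorem exists_eq_sum_tmul_tmul (t : L ⊗[k] (M ⊗[k] N)) :
    ∃ (n : ℕ) (a : Fin n → L) (b : Fin n → M) (c : Fin n → N),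
      t = ∑ i, a i ⊗ₜ[k] (b i ⊗ₜ[k] c i) := by
  induction t using TensorProduct.induction_on with
  | zero => exact ⟨0, Fin.elim0, Fin.elim0, Fin.elim0, by simp⟩
  | tmul x y =>
    obtain ⟨n, b, c, rfl⟩ := exists_eq_sum_tmul y
    exact ⟨n, fun _ => x, b, c, TensorProduct.tmul_sum _ _ _⟩
  | add x y hx hy =>
    obtain ⟨n, a, b, c, rfl⟩ := hx
    obtain ⟨m, a', b', c', rfl⟩ := hy
    exact ⟨n + m, Fin.append a a', Fin.append b b', Fin.append c c', by simp [Fin.sum_univ_add]⟩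

@[elab_as_elim]
theorem tensorProduct_induction₃ {p : L ⊗[k] (M ⊗[k] N) → Prop} (t : L ⊗[k] (M ⊗[k] N))
    (zero : p 0) (tmul : ∀ a b c, p (a ⊗ₜ (b ⊗ₜ c))) (add : ∀ x y, p x → p y → p (x + y)) :
    p t := by
  obtain ⟨n, a, b, c, rfl⟩ := exists_eq_sum_tmul_tmul t
  exact Finset.sum_induction _ p add zero fun i _ => tmul _ _ _

end Tensor

theorem mul_mul_mul_of_semiconjBy {M : Type*} [Semigroup M] {t x y : M} (h : SemiconjBy t x y)
    (a b c : M) : a * (b * c * t) * x = a * (b * (c * y) * t) := by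
  simp only [mul_assoc, h.eq]

noncomputable section

local notation:70 f:71 " ⊗ₐ " g:70 => Algebra.TensorProduct.map f g

section MulMap

variable {k A B C D D' M N : Type*} [CommSemiring k] [Semiring A] [Algebra k A]
  [AddCommMonoid M] [Module k M] [AddCommMonoid N] [Module k N]

/-- The linear map `m ⊗ n ↦ F m * G n` on `M ⊗ N`, which evaluates Sweedler-type expressions such
as `F(b₍₀₎) G(b₍₁₎)`. -/
def mulMap (F : M →ₗ[k] A) (G : N →ₗ[k] A) : M ⊗[k] N →ₗ[k] A :=
  LinearMap.mul' k A ∘ₗ TensorProduct.map F G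

@[simp]
theorem mulMap_tmul (F : M →ₗ[k] A) (G : N →ₗ[k] A) (m : M) (n : N) :
    mulMap F G (m ⊗ₜ n) = F m * G n := by
  simp [mulMap]

variable [Semiring B] [Algebra k B] [Semiring C] [Algebra k C]

theorem mulMap_mul_tmul (F : B →ₗ[k] A) (g : C →ₐ[k] A) (z : B ⊗[k] C) (b : B) (c : C) :
    mulMap F g.toLinearMap (z * b ⊗ₜ c)
      = mulMap (F ∘ₗ LinearMap.mulRight k b) g.toLinearMap z * g c := by
  induction z using TensorProduct.induction_on with
  | zero => simp
  | tmul x y => simp [mul_assoc]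
  | add x y hx hy => simp only [add_mul, map_add, hx, hy]

variable [Semiring D] [Algebra k D] [Semiring D'] [Algebra k D']

theorem mulMap_one_tmul_mul_map (F : B →ₗ[k] A) (G : C →ₗ[k] A) (c : C) (f : D →ₐ[k] C)
    (w : B ⊗[k] D) :
    mulMap F G (1 ⊗ₜ c * (AlgHom.id k B ⊗ₐ f) w)
      = mulMap F (G ∘ₗ LinearMap.mulLeft k c ∘ₗ f.toLinearMap) w := by
  induction w using TensorProduct.induction_on with
  | zero => simp
  | tmul x y => simp
  | add x y hx hy => simp only [map_add, mul_add, hx, hy]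

theorem mulMap_map_mul_of_map_eq_one (F : B →ₗ[k] A) {G : C →ₗ[k] A} {f : D →ₐ[k] C}
    {p : D →ₐ[k] D'} {g : D' →ₐ[k] A} (hG : ∀ d c, G (f d * c) = g (p d) * G c)
    {w : B ⊗[k] D} (hw : (AlgHom.id k B ⊗ₐ p) w = 1) (z : B ⊗[k] C) :
    mulMap F G ((AlgHom.id k B ⊗ₐ f) w * z) = mulMap F G z := by
  induction z using TensorProduct.induction_on with
  | zero => simp
  | add x y hx hy => simp only [map_add, mul_add, hx, hy]
  | tmul b c =>
    have h (w : B ⊗[k] D) : mulMap F G ((AlgHom.id k B ⊗ₐ f) w * b ⊗ₜ c)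
        = mulMap (F ∘ₗ LinearMap.mulRight k b) g.toLinearMap ((AlgHom.id k B ⊗ₐ p) w) * G c := by
      induction w using TensorProduct.induction_on with
      | zero => simp
      | tmul x y => simp [hG, mul_assoc]
      | add x y hx hy => simp only [map_add, add_mul, hx, hy]
    simp [h, hw, Algebra.TensorProduct.one_def]

end MulMap

section TensorOne

variable (k A H : Type*) [CommSemiring k] [Semiring A] [Algebra k A] [Semiring H] [Algebra k H]

/-- The algebra map `t ↦ t ⊗ 1`, with the result bracketed to the right. -/
def tensorOne : A ⊗[k] H →ₐ[k] A ⊗[k] (H ⊗[k] H) :=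
  AlgHom.id k A ⊗ₐ Algebra.TensorProduct.includeLeft

variable {A H}

@[simp]
theorem tensorOne_tmul (a : A) (h : H) : tensorOne k A H (a ⊗ₜ h) = a ⊗ₜ (h ⊗ₜ 1) := by
  simp [tensorOne]

theorem assoc_tmul_eq_tensorOne_mul (t : A ⊗[k] H) (h : H) :
    Algebra.TensorProduct.assoc k k k A H H (t ⊗ₜ h) = tensorOne k A H t * 1 ⊗ₜ (1 ⊗ₜ h) := by
  induction t using TensorProduct.induction_on with
  | zero => simp
  | tmul a g => simp
  | add x y hx hy => simp only [TensorProduct.add_tmul, map_add, add_mul, hx, hy]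

theorem commute_tmul_tensorOne (h : H) (t : A ⊗[k] H) :
    Commute (1 ⊗ₜ (1 ⊗ₜ h)) (tensorOne k A H t) := by
  induction t using TensorProduct.induction_on with
  | zero => simp
  | tmul a g => simp [commute_iff_eq]
  | add x y hx hy => simpa only [map_add] using hx.add_right hy

end TensorOne

namespace QuasiBialgebra

variable {k H : Type*} [Field k] [Ring H] [Algebra k H] (Q : QuasiBialgebra k H)
variable (A C D : Type*) [Ring A] [Algebra k A] [Ring C] [Algebra k C] [Ring D] [Algebra k D]

/-- `ε ⊗ id : H ⊗ C → C`. -/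
def counitLeft : H ⊗[k] C →ₐ[k] C :=
  (Algebra.TensorProduct.lid k C).toAlgHom.comp (Q.counit ⊗ₐ AlgHom.id k C)

/-- `id ⊗ ε : A ⊗ H → A`. -/
def counitRight : A ⊗[k] H →ₐ[k] A :=
  (Algebra.TensorProduct.rid k k A).toAlgHom.comp (AlgHom.id k A ⊗ₐ Q.counit)

/-- `Δ ⊗ id : H ⊗ C → H ⊗ H ⊗ C`, with the result bracketed to the right. -/
def comulLeft : H ⊗[k] C →ₐ[k] H ⊗[k] (H ⊗[k] C) :=
  (Algebra.TensorProduct.assoc k k k H H C).toAlgHom.comp (Q.comul ⊗ₐ AlgHom.id k C)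

/-- `id ⊗ Δ : A ⊗ H → A ⊗ H ⊗ H`. -/
def comulRight : A ⊗[k] H →ₐ[k] A ⊗[k] (H ⊗[k] H) :=
  AlgHom.id k A ⊗ₐ Q.comul

variable {A C D}

@[simp]
theorem counitLeft_tmul (h : H) (c : C) : Q.counitLeft C (h ⊗ₜ c) = Q.counit h • c := by
  simp [counitLeft]

@[simp]
theorem counitRight_tmul (a : A) (h : H) : Q.counitRight A (a ⊗ₜ h) = Q.counit h • a := by
  simp [counitRight]

theorem comulLeft_tmul (h : H) (c : C) :
    Q.comulLeft C (h ⊗ₜ c) = Algebra.TensorProduct.assoc k k k H H C (Q.comul h ⊗ₜ c) := by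
  simp [comulLeft]

@[simp]
theorem comulRight_tmul (a : A) (h : H) : Q.comulRight A (a ⊗ₜ h) = a ⊗ₜ Q.comul h := by
  simp [comulRight]

theorem counitLeft_comul (h : H) : Q.counitLeft H (Q.comul h) = h := by
  simp [counitLeft, Q.counit_comul_left]

theorem counitRight_comul (h : H) : Q.counitRight H (Q.comul h) = h := by
  simp [counitRight, Q.counit_comul_right]

theorem counitLeft_comp_comulLeft :
    (Q.counitLeft (H ⊗[k] C)).comp (Q.comulLeft C) = AlgHom.id k (H ⊗[k] C) := by
  have h : (Q.counitLeft (H ⊗[k] C)).comp (Algebra.TensorProduct.assoc k k k H H C).toAlgHom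
      = Q.counitLeft H ⊗ₐ AlgHom.id k C := by
    ext <;> simp [Algebra.TensorProduct.one_def, TensorProduct.smul_tmul']
  refine Algebra.TensorProduct.ext' fun a c => ?_
  have := DFunLike.congr_fun h (Q.comul a ⊗ₜ c)
  simpa [comulLeft_tmul, counitLeft_comul] using this

theorem map_counitLeft_comp_comulLeft :
    (AlgHom.id k H ⊗ₐ Q.counitLeft C).comp (Q.comulLeft C) = AlgHom.id k (H ⊗[k] C) := by
  have h : (AlgHom.id k H ⊗ₐ Q.counitLeft C).comp
        (Algebra.TensorProduct.assoc k k k H H C).toAlgHom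
      = Q.counitRight H ⊗ₐ AlgHom.id k C := by
    ext <;> simp [Algebra.TensorProduct.one_def]
  refine Algebra.TensorProduct.ext' fun a c => ?_
  have := DFunLike.congr_fun h (Q.comul a ⊗ₜ c)
  simpa [comulLeft_tmul, counitRight_comul] using this

theorem counitLeft_comp_map (f : C →ₐ[k] D) :
    (Q.counitLeft D).comp (AlgHom.id k H ⊗ₐ f) = f.comp (Q.counitLeft C) := by
  ext <;> simp

theorem map_counitLeft_Phi : (AlgHom.id k H ⊗ₐ Q.counitLeft H) Q.Phi = 1 := by
  rw [counitLeft, Algebra.TensorProduct.map_id_comp, AlgHom.comp_apply, Q.counit_Phi, map_one]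

theorem map_counitLeft_tensorOne (t : A ⊗[k] H) :
    (AlgHom.id k A ⊗ₐ Q.counitLeft H) (tensorOne k A H t) = Q.counitRight A t ⊗ₜ 1 := by
  induction t using TensorProduct.induction_on with
  | zero => simp
  | add x y hx hy => simp only [map_add, TensorProduct.add_tmul, hx, hy]
  | tmul a h => simp [TensorProduct.smul_tmul']

theorem eq_one_of_mul_Phi {u : H ⊗[k] (H ⊗[k] H)} (h : u * Q.Phi = Q.Phi) : u = 1 := by
  simpa [mul_assoc, Q.Phi_mul_inv] using congrArg (· * Q.PhiInv) h

theorem counitLeft_Phi : Q.counitLeft (H ⊗[k] H) Q.Phi = 1 := by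
  let e := AlgHom.id k H ⊗ₐ Q.counitLeft (H ⊗[k] H)
  have he (f : H ⊗[k] H →ₐ[k] H ⊗[k] (H ⊗[k] H)) (w : H ⊗[k] (H ⊗[k] H)) :
      e ((AlgHom.id k H ⊗ₐ f) w) = (AlgHom.id k H ⊗ₐ (Q.counitLeft _).comp f) w := by
    simp only [e, Algebra.TensorProduct.map_id_comp, AlgHom.comp_apply]
  have he_one (f : H →ₐ[k] H ⊗[k] H) : e ((AlgHom.id k H ⊗ₐ (AlgHom.id k H ⊗ₐ f)) Q.Phi) = 1 := by
    rw [he, counitLeft_comp_map, Algebra.TensorProduct.map_id_comp, AlgHom.comp_apply,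
      map_counitLeft_Phi, map_one]
  have he_comulLeft : e (Q.comulLeft (H ⊗[k] H) Q.Phi) = Q.Phi :=
    DFunLike.congr_fun Q.map_counitLeft_comp_comulLeft Q.Phi
  have pentagon : 1 ⊗ₜ Q.counitLeft (H ⊗[k] H) Q.Phi * Q.Phi = Q.Phi := by
    have h := congrArg e Q.pentagon
    rw [map_mul, map_mul, map_mul] at h
    change _ * e ((AlgHom.id k H ⊗ₐ Q.comulLeft H) Q.Phi) * _
      = _ * e (Q.comulLeft (H ⊗[k] H) Q.Phi) at h
    rw [he_one, he_one, he, counitLeft_comp_comulLeft, he_comulLeft, one_mul, mul_one] at h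
    simpa [e] using h
  simpa using congrArg (Q.counitLeft (H ⊗[k] H)) (Q.eq_one_of_mul_Phi pentagon)

theorem counitLeft_PhiInv : Q.counitLeft (H ⊗[k] H) Q.PhiInv = 1 := by
  simpa [Q.counitLeft_Phi] using congrArg (Q.counitLeft (H ⊗[k] H)) Q.inv_mul_Phi

end QuasiBialgebra

namespace QuasiHopfAlgebra

variable {k H B : Type*} [Field k] [Ring H] [Algebra k H] [Ring B] [Algebra k B]
variable (Q : QuasiHopfAlgebra k H) (v : H →ₐ[k] B)

/-- The evaluation `a ⊗ b ↦ S(a) α b`. -/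
def alphaContract : H ⊗[k] H →ₗ[k] H :=
  mulMap Q.S (LinearMap.mulLeft k Q.alpha)

/-- The contraction `a ⊗ b ↦ a β S(b)`. -/
def betaContract : H ⊗[k] H →ₗ[k] H :=
  mulMap LinearMap.id (LinearMap.mulLeft k Q.beta ∘ₗ Q.S)

/-- The map `b ⊗ g ⊗ h ↦ b v(β S(g) α h)`; for `v = id` it sends the reassociator to `1`. -/
def zigzag : B ⊗[k] (H ⊗[k] H) →ₗ[k] B :=
  mulMap LinearMap.id (v.toLinearMap ∘ₗ LinearMap.mulLeft k Q.beta ∘ₗ Q.alphaContract)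

@[simp]
theorem alphaContract_tmul (a b : H) : Q.alphaContract (a ⊗ₜ b) = Q.S a * (Q.alpha * b) := by
  simp [alphaContract]

@[simp]
theorem betaContract_tmul (a b : H) : Q.betaContract (a ⊗ₜ b) = a * (Q.beta * Q.S b) := by
  simp [betaContract]

@[simp]
theorem zigzag_tmul (b : B) (t : H ⊗[k] H) :
    Q.zigzag v (b ⊗ₜ t) = b * (v Q.beta * v (Q.alphaContract t)) := by
  simp [zigzag]

theorem alphaContract_comul (h : H) : Q.alphaContract (Q.comul h) = Q.counit h • Q.alpha := by
  obtain ⟨n, a, b, e⟩ := exists_eq_sum_tmul (Q.comul h)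
  rw [← Q.antipode_left h n a b e, e]
  simp [mul_assoc]

theorem betaContract_comul (h : H) : Q.betaContract (Q.comul h) = Q.counit h • Q.beta := by
  obtain ⟨n, a, b, e⟩ := exists_eq_sum_tmul (Q.comul h)
  rw [← Q.antipode_right h n a b e, e]
  simp [mul_assoc]

theorem alphaContract_mul_tmul (d : H ⊗[k] H) (a b : H) :
    Q.alphaContract (d * a ⊗ₜ b) = Q.S a * (Q.alphaContract d * b) := by
  induction d using TensorProduct.induction_on with
  | zero => simp
  | tmul x y => simp [Q.S_mul, mul_assoc]
  | add x y hx hy => simp only [add_mul, mul_add, map_add, hx, hy]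

theorem alphaContract_comul_mul (h : H) (t : H ⊗[k] H) :
    Q.alphaContract (Q.comul h * t) = Q.counit h • Q.alphaContract t := by
  induction t using TensorProduct.induction_on with
  | zero => simp
  | tmul x y => simp [alphaContract_mul_tmul, alphaContract_comul]
  | add x y hx hy => simp only [mul_add, map_add, smul_add, hx, hy]

theorem zigzag_comulRight_mul (t : B ⊗[k] H) (z : B ⊗[k] (H ⊗[k] H)) :
    Q.zigzag v (Q.comulRight B t * z) = Q.counitRight B t * Q.zigzag v z := by
  induction t using TensorProduct.induction_on with
  | zero => simp
  | add x y hx hy => simp only [map_add, add_mul, hx, hy]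
  | tmul b h =>
    induction z using TensorProduct.induction_on with
    | zero => simp
    | add x y hx hy => simp only [map_add, mul_add, hx, hy]
    | tmul c t => simp [alphaContract_comul_mul, mul_assoc]

theorem zigzag_mul_one_tmul_one_tmul (z : B ⊗[k] (H ⊗[k] H)) (h : H) :
    Q.zigzag v (z * 1 ⊗ₜ (1 ⊗ₜ h)) = Q.zigzag v z * v h := by
  induction z using tensorProduct_induction₃ with
  | zero => simp
  | add x y hx hy => simp only [map_add, add_mul, hx, hy]
  | tmul b g g' => simp [mul_assoc]

theorem zigzag_tmul_mul_tensorOne_map (b : B) (g g' : H) (d : H ⊗[k] H) :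
    Q.zigzag v (b ⊗ₜ (g ⊗ₜ g') * tensorOne k B H ((v ⊗ₐ AlgHom.id k H) d))
      = b * (v (Q.betaContract d) * v (Q.alphaContract (g ⊗ₜ g'))) := by
  induction d using TensorProduct.induction_on with
  | zero => simp
  | tmul x y => simp [Q.S_mul, mul_assoc]
  | add x y hx hy => simp only [map_add, add_mul, mul_add, hx, hy]

theorem zigzag_mul_tensorOne_map_comul (z : B ⊗[k] (H ⊗[k] H)) (h : H) :
    Q.zigzag v (z * tensorOne k B H ((v ⊗ₐ AlgHom.id k H) (Q.comul h)))
      = Q.counit h • Q.zigzag v z := by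
  induction z using tensorProduct_induction₃ with
  | zero => simp
  | add x y hx hy => simp only [map_add, add_mul, smul_add, hx, hy]
  | tmul b g g' =>
    rw [zigzag_tmul_mul_tensorOne_map, betaContract_comul]
    simp

theorem zigzag_map (w : H ⊗[k] (H ⊗[k] H)) :
    Q.zigzag v ((v ⊗ₐ AlgHom.id k (H ⊗[k] H)) w) = v (Q.zigzag (AlgHom.id k H) w) := by
  induction w using TensorProduct.induction_on with
  | zero => simp
  | tmul a t => simp
  | add x y hx hy => simp only [map_add, hx, hy]

theorem zigzag_id_Phi : Q.zigzag (AlgHom.id k H) Q.Phi = 1 := by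
  obtain ⟨n, a, b, c, e⟩ := exists_eq_sum_tmul_tmul Q.Phi
  rw [← Q.antipode_Phi n a b c e, e]
  simp [mul_assoc]

theorem zigzag_id_mul_comulLeft (z : H ⊗[k] (H ⊗[k] H)) (t : H ⊗[k] H) :
    Q.zigzag (AlgHom.id k H) (z * Q.comulLeft H t)
      = Q.zigzag (AlgHom.id k H) z * Q.counitLeft H t := by
  induction t using TensorProduct.induction_on with
  | zero => simp
  | add x y hx hy => simp only [map_add, mul_add, hx, hy]
  | tmul h c =>
    have invariant := Q.zigzag_mul_tensorOne_map_comul (AlgHom.id k H) z h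
    rw [Algebra.TensorProduct.map_id, AlgHom.id_apply] at invariant
    rw [QuasiBialgebra.comulLeft_tmul, assoc_tmul_eq_tensorOne_mul, ← mul_assoc,
      zigzag_mul_one_tmul_one_tmul, invariant]
    simp

section MulMap

variable {A : Type*} [Ring A] [Algebra k A] (F : B →ₗ[k] A) (g : H →ₐ[k] A)

theorem mulMap_zigzag_map_comulRight_mul {w : B ⊗[k] (H ⊗[k] H)}
    (hw : (AlgHom.id k B ⊗ₐ Q.counitRight H) w = 1) (z : B ⊗[k] (H ⊗[k] (H ⊗[k] H))) :
    mulMap F (g.toLinearMap ∘ₗ Q.zigzag (AlgHom.id k H))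
        ((AlgHom.id k B ⊗ₐ Q.comulRight H) w * z)
      = mulMap F (g.toLinearMap ∘ₗ Q.zigzag (AlgHom.id k H)) z :=
  mulMap_map_mul_of_map_eq_one F (g := g) (by simp [zigzag_comulRight_mul]) hw z

theorem mulMap_zigzag_one_tmul_Phi_mul (w : B ⊗[k] (H ⊗[k] H)) :
    mulMap F (g.toLinearMap ∘ₗ Q.zigzag (AlgHom.id k H))
        (1 ⊗ₜ Q.Phi * (AlgHom.id k B ⊗ₐ Q.comulLeft H) w)
      = mulMap F g.toLinearMap ((AlgHom.id k B ⊗ₐ Q.counitLeft H) w) := by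
  rw [mulMap_one_tmul_mul_map]
  induction w using TensorProduct.induction_on with
  | zero => simp
  | add x y hx hy => simp only [map_add, hx, hy]
  | tmul b t => simp [zigzag_id_mul_comulLeft, zigzag_id_Phi]

end MulMap

end QuasiHopfAlgebra

namespace RightComoduleAlgebra

variable {k H B : Type*} [Field k] [Ring H] [Algebra k H] [Ring B] [Algebra k B]

section Coaction

variable {Q : QuasiBialgebra k H} (R : RightComoduleAlgebra Q B)
variable (C : Type*) [Ring C] [Algebra k C]

/-- `ρ ⊗ id : B ⊗ C → B ⊗ H ⊗ C`, with the result bracketed to the right. -/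
def coactLeft : B ⊗[k] C →ₐ[k] B ⊗[k] (H ⊗[k] C) :=
  (Algebra.TensorProduct.assoc k k k B H C).toAlgHom.comp (R.coact ⊗ₐ AlgHom.id k C)

variable {C}

theorem coactLeft_tmul (b : B) (c : C) :
    R.coactLeft C (b ⊗ₜ c) = Algebra.TensorProduct.assoc k k k B H C (R.coact b ⊗ₜ c) := by
  simp [coactLeft]

theorem counitRight_coact (b : B) : Q.counitRight B (R.coact b) = b := by
  simp [QuasiBialgebra.counitRight, R.counit_coact]

theorem PhiRho_mul_coactLeft_coact (b : B) :
    R.PhiRho * R.coactLeft H (R.coact b) = Q.comulRight B (R.coact b) * R.PhiRho :=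
  R.coact_coassoc b

theorem PhiRhoInv_mul_comulRight_coact (b : B) :
    R.PhiRhoInv * Q.comulRight B (R.coact b) = R.coactLeft H (R.coact b) * R.PhiRhoInv := by
  have h := congrArg (R.PhiRhoInv * · * R.PhiRhoInv) (R.PhiRho_mul_coactLeft_coact b)
  simpa only [← mul_assoc, R.inv_mul_PhiRho, one_mul, mul_assoc _ R.PhiRho, R.PhiRho_mul_inv,
    mul_one] using h.symm

theorem map_counitLeft_PhiRho : (AlgHom.id k B ⊗ₐ Q.counitLeft H) R.PhiRho = 1 := by
  rw [QuasiBialgebra.counitLeft, Algebra.TensorProduct.map_id_comp, AlgHom.comp_apply,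
    R.counit_PhiRho_mid, map_one]

theorem map_counitRight_PhiRho : (AlgHom.id k B ⊗ₐ Q.counitRight H) R.PhiRho = 1 := by
  rw [QuasiBialgebra.counitRight, Algebra.TensorProduct.map_id_comp, AlgHom.comp_apply,
    R.counit_PhiRho_right, map_one]

theorem map_counitRight_PhiRhoInv : (AlgHom.id k B ⊗ₐ Q.counitRight H) R.PhiRhoInv = 1 := by
  simpa [R.map_counitRight_PhiRho] using
    congrArg (AlgHom.id k B ⊗ₐ Q.counitRight H) R.inv_mul_PhiRho

theorem coactLeft_mul_tensorOne (c : B) (h : H) (s : B ⊗[k] H) :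
    R.coactLeft H (c ⊗ₜ h) * tensorOne k B H s
      = tensorOne k B H (R.coact c * s) * 1 ⊗ₜ (1 ⊗ₜ h) := by
  rw [coactLeft_tmul, assoc_tmul_eq_tensorOne_mul, mul_assoc,
    (commute_tmul_tensorOne k h s).eq, ← mul_assoc, map_mul]

theorem coactLeft_tensorOne (t : B ⊗[k] H) :
    R.coactLeft (H ⊗[k] H) (tensorOne k B H t)
      = (AlgHom.id k B ⊗ₐ tensorOne k H H) (R.coactLeft H t) := by
  have h : (AlgHom.id k B ⊗ₐ tensorOne k H H).comp
        (Algebra.TensorProduct.assoc k k k B H H).toAlgHom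
      = (Algebra.TensorProduct.assoc k k k B H (H ⊗[k] H)).toAlgHom.comp
        (AlgHom.id k (B ⊗[k] H) ⊗ₐ Algebra.TensorProduct.includeLeft) := by
    ext <;> simp [Algebra.TensorProduct.one_def]
  induction t using TensorProduct.induction_on with
  | zero => simp
  | add x y hx hy => simp only [map_add, hx, hy]
  | tmul b g => simpa [coactLeft_tmul] using (DFunLike.congr_fun h (R.coact b ⊗ₜ g)).symm

theorem comulRight_tensorOne (t : B ⊗[k] H) :
    (AlgHom.id k B ⊗ₐ tensorOne k H H) (Q.comulRight B t)
      = (AlgHom.id k B ⊗ₐ Q.comulLeft H) (tensorOne k B H t) := by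
  have h : tensorOne k H H = (Algebra.TensorProduct.assoc k k k H H H).toAlgHom.comp
      Algebra.TensorProduct.includeLeft := by
    ext <;> simp
  induction t using TensorProduct.induction_on with
  | zero => simp
  | add x y hx hy => simp only [map_add, hx, hy]
  | tmul b g => simp [QuasiBialgebra.comulLeft_tmul, h]

theorem PhiRhoInv_eq {v : H →ₐ[k] B} (hv : IsComodAlgMorphismFromH R v) :
    R.PhiRhoInv = (v ⊗ₐ AlgHom.id k (H ⊗[k] H)) Q.PhiInv := by
  refine left_inv_eq_right_inv R.inv_mul_PhiRho ?_
  rw [hv.2, ← map_mul, Q.Phi_mul_inv, map_one]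

theorem pentagon_inv :
    (AlgHom.id k B ⊗ₐ Q.comulRight H) R.PhiRhoInv * (1 ⊗ₜ Q.Phi
        * (AlgHom.id k B ⊗ₐ Q.comulLeft H) R.PhiRho
        * (AlgHom.id k B ⊗ₐ tensorOne k H H) R.PhiRho)
      = R.coactLeft (H ⊗[k] H) R.PhiRho := by
  have pentagon : 1 ⊗ₜ Q.Phi * (AlgHom.id k B ⊗ₐ Q.comulLeft H) R.PhiRho
        * (AlgHom.id k B ⊗ₐ tensorOne k H H) R.PhiRho
      = (AlgHom.id k B ⊗ₐ Q.comulRight H) R.PhiRho * R.coactLeft (H ⊗[k] H) R.PhiRho :=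
    R.pentagon
  rw [pentagon, ← mul_assoc, ← map_mul, R.inv_mul_PhiRho, map_one, one_mul]

theorem coactLeft_PhiRho_mul_tensorOne_coact (b : B) :
    R.coactLeft (H ⊗[k] H) (R.PhiRho * tensorOne k B H (R.coact b))
      = (AlgHom.id k B ⊗ₐ Q.comulRight H) R.PhiRhoInv
        * (1 ⊗ₜ Q.Phi * (AlgHom.id k B ⊗ₐ Q.comulLeft H) (R.PhiRho * tensorOne k B H (R.coact b))
          * (AlgHom.id k B ⊗ₐ tensorOne k H H) R.PhiRho) := by
  have h : SemiconjBy ((AlgHom.id k B ⊗ₐ tensorOne k H H) R.PhiRho)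
      (R.coactLeft (H ⊗[k] H) (tensorOne k B H (R.coact b)))
      ((AlgHom.id k B ⊗ₐ Q.comulLeft H) (tensorOne k B H (R.coact b))) := by
    rw [SemiconjBy, coactLeft_tensorOne, ← map_mul, PhiRho_mul_coactLeft_coact, map_mul,
      comulRight_tensorOne]
  rw [map_mul, ← pentagon_inv, map_mul (AlgHom.id k B ⊗ₐ Q.comulLeft H)]
  exact mul_mul_mul_of_semiconjBy h _ _ _

end Coaction

section CanonicalProjection

variable {Q : QuasiHopfAlgebra k H} (R : RightComoduleAlgebra Q.toQuasiBialgebra B) (v : H →ₐ[k] B)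

/-- The canonical projection `E(b) = X_ρ¹ b₍₀₎ v(β S(X_ρ² b₍₁₎) α X_ρ³)`. Since
`Φ_ρ = v(X¹) ⊗ X² ⊗ X³`, this is `v(q¹) b₍₀₎ v(β S(q² b₍₁₎))`. -/
def canonicalProjection : B →ₗ[k] B :=
  Q.zigzag v ∘ₗ LinearMap.mulLeft k R.PhiRho ∘ₗ
    (tensorOne k B H).toLinearMap ∘ₗ R.coact.toLinearMap

theorem canonicalProjection_apply (b : B) :
    R.canonicalProjection v b = Q.zigzag v (R.PhiRho * tensorOne k B H (R.coact b)) := by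
  simp [canonicalProjection]

variable {R v}

theorem _root_.IsCanonicalProjection.eq_canonicalProjection {E : B →ₗ[k] B}
    (hE : IsCanonicalProjection Q R v E) (hv : IsComodAlgMorphismFromH R v) :
    E = R.canonicalProjection v := by
  ext b
  obtain ⟨n, X1, X2, X3, hΦ⟩ := exists_eq_sum_tmul_tmul Q.Phi
  obtain ⟨p, b0, b1, hb⟩ := exists_eq_sum_tmul (R.coact b)
  rw [hE b n X1 X2 X3 hΦ p b0 b1 hb, canonicalProjection_apply, hv.2, hΦ, hb]
  simp only [map_sum, Finset.sum_mul_sum, Algebra.TensorProduct.map_tmul,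
    Algebra.TensorProduct.tmul_mul_tmul, tensorOne_tmul, QuasiHopfAlgebra.zigzag_tmul,
    QuasiHopfAlgebra.alphaContract_tmul, AlgHom.coe_id, id_eq, Q.S_mul, Q.S_Sinv, map_mul,
    mul_assoc, mul_one]

theorem canonicalProjection_one (hv : IsComodAlgMorphismFromH R v) :
    R.canonicalProjection v 1 = 1 := by
  rw [canonicalProjection_apply, map_one, map_one, mul_one, hv.2, Q.zigzag_map, Q.zigzag_id_Phi,
    map_one]

theorem canonicalProjection_mul_apply (hv : IsComodAlgMorphismFromH R v) (b : B) (h : H) :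
    R.canonicalProjection v (b * v h) = Q.counit h • R.canonicalProjection v b := by
  simp only [canonicalProjection_apply, map_mul, hv.1]
  rw [← mul_assoc, Q.zigzag_mul_tensorOne_map_comul]

theorem mulMap_canonicalProjection_coact (c b : B) :
    mulMap (R.canonicalProjection v ∘ₗ LinearMap.mulRight k b) v.toLinearMap (R.coact c)
      = c * R.canonicalProjection v b := by
  have mulMap_eq (t : B ⊗[k] H) :
      mulMap (R.canonicalProjection v ∘ₗ LinearMap.mulRight k b) v.toLinearMap t
        = Q.zigzag v (R.PhiRho * R.coactLeft H t * tensorOne k B H (R.coact b)) := by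
    induction t using TensorProduct.induction_on with
    | zero => simp
    | add x y hx hy => simp only [map_add, add_mul, mul_add, hx, hy]
    | tmul x y =>
      rw [mul_assoc, coactLeft_mul_tensorOne, ← mul_assoc, Q.zigzag_mul_one_tmul_one_tmul,
        mulMap_tmul, LinearMap.comp_apply, LinearMap.mulRight_apply, canonicalProjection_apply,
        map_mul R.coact]
      rfl
  rw [mulMap_eq, PhiRho_mul_coactLeft_coact, mul_assoc, Q.zigzag_comulRight_mul,
    counitRight_coact, canonicalProjection_apply]

theorem canonicalProjection_mul_canonicalProjection (hv : IsComodAlgMorphismFromH R v) (c b : B) :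
    R.canonicalProjection v (c * R.canonicalProjection v b) = R.canonicalProjection v (c * b) := by
  have mul_apply (c b : B) : R.canonicalProjection v (c * R.canonicalProjection v b)
      = R.canonicalProjection v (R.canonicalProjection v (c * b)) := by
    have projection_mulMap (t : B ⊗[k] H) : R.canonicalProjection v
          (mulMap (R.canonicalProjection v ∘ₗ LinearMap.mulRight k b) v.toLinearMap t)
        = R.canonicalProjection v (R.canonicalProjection v (Q.counitRight B t * b)) := by
      induction t using TensorProduct.induction_on with
      | zero => simp
      | add x y hx hy => simp only [map_add, add_mul, hx, hy]
      | tmul x y => simp [canonicalProjection_mul_apply hv]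
    rw [← mulMap_canonicalProjection_coact, projection_mulMap, counitRight_coact]
  have idem (x : B) : R.canonicalProjection v (R.canonicalProjection v x)
      = R.canonicalProjection v x := by
    simpa [canonicalProjection_one hv] using (mul_apply x 1).symm
  rw [mul_apply, idem]

/-- A linear map `F : B → A` along an algebra map `σ : B → A` which is unital, `ε`-invariant under
right multiplication by `v(H)`, and satisfies `F(c₍₀₎ b) σ(v(c₍₁₎)) = σ(c) F(b)`. For `σ = id` the
canonical projection has these properties. -/
structure IsProjectionAlong {A : Type*} [Ring A] [Algebra k A]
    (R : RightComoduleAlgebra Q.toQuasiBialgebra B) (v : H →ₐ[k] B) (σ : B →ₐ[k] A)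
    (F : B →ₗ[k] A) : Prop where
  apply_one : F 1 = 1
  apply_mul : ∀ b h, F (b * v h) = Q.counit h • F b
  mulMap_coact : ∀ c b,
    mulMap (F ∘ₗ LinearMap.mulRight k b) (σ.comp v).toLinearMap (R.coact c) = σ c * F b

namespace IsProjectionAlong

variable {A : Type*} [Ring A] [Algebra k A] {σ : B →ₐ[k] A} {F : B →ₗ[k] A}

theorem mulMap_coactLeft (hF : IsProjectionAlong R v σ F) (z : B ⊗[k] (H ⊗[k] H)) :
    mulMap F ((σ.comp v).toLinearMap ∘ₗ Q.zigzag (AlgHom.id k H)) (R.coactLeft (H ⊗[k] H) z)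
      = σ (Q.zigzag v z) := by
  induction z using TensorProduct.induction_on with
  | zero => simp
  | add x y hx hy => simp only [map_add, hx, hy]
  | tmul c t =>
    have mulMap_assoc (s : B ⊗[k] H) :
        mulMap F ((σ.comp v).toLinearMap ∘ₗ Q.zigzag (AlgHom.id k H))
            (Algebra.TensorProduct.assoc k k k B H (H ⊗[k] H) (s ⊗ₜ t))
          = mulMap F (σ.comp v).toLinearMap s * σ (v (Q.beta * Q.alphaContract t)) := by
      induction s using TensorProduct.induction_on with
      | zero => simp
      | tmul x y => simp [mul_assoc]
      | add x y hx hy => simp only [TensorProduct.add_tmul, map_add, add_mul, hx, hy]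
    have mulMap_coact_c : mulMap F (σ.comp v).toLinearMap (R.coact c) = σ c := by
      simpa [hF.apply_one] using hF.mulMap_coact c 1
    rw [coactLeft_tmul, mulMap_assoc, mulMap_coact_c, QuasiHopfAlgebra.zigzag_tmul]
    simp only [map_mul]

theorem mulMap_mul_map_map (hF : IsProjectionAlong R v σ F) {C D : Type*} [Ring C] [Algebra k C]
    [Ring D] [Algebra k D] (G : C →ₗ[k] A) (f : D →ₐ[k] C) (w : H ⊗[k] D) (z : B ⊗[k] C) :
    mulMap F G (z * (AlgHom.id k B ⊗ₐ f) ((v ⊗ₐ AlgHom.id k D) w))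
      = mulMap F G (z * 1 ⊗ₜ f (Q.counitLeft D w)) := by
  induction z using TensorProduct.induction_on with
  | zero => simp
  | add x y hx hy => simp only [map_add, add_mul, hx, hy]
  | tmul b c =>
    induction w using TensorProduct.induction_on with
    | zero => simp
    | add x y hx hy => simp only [map_add, TensorProduct.tmul_add, mul_add, hx, hy]
    | tmul h d => simp [hF.apply_mul]

theorem mulMap_mul_map_PhiRho (hF : IsProjectionAlong R v σ F) (hv : IsComodAlgMorphismFromH R v)
    {C : Type*} [Ring C] [Algebra k C] (G : C →ₗ[k] A) (f : H ⊗[k] H →ₐ[k] C) (z : B ⊗[k] C) :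
    mulMap F G (z * (AlgHom.id k B ⊗ₐ f) R.PhiRho) = mulMap F G z := by
  have hf : f (Q.counitLeft (H ⊗[k] H) Q.Phi) = 1 := by
    rw [Q.counitLeft_Phi]
    exact map_one f
  rw [hv.2, hF.mulMap_mul_map_map, hf, ← Algebra.TensorProduct.one_def, mul_one]

theorem eq_comp_canonicalProjection (hF : IsProjectionAlong R v σ F)
    (hv : IsComodAlgMorphismFromH R v) (b : B) : F b = σ (R.canonicalProjection v b) := by
  rw [canonicalProjection_apply, ← hF.mulMap_coactLeft, coactLeft_PhiRho_mul_tensorOne_coact,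
    Q.mulMap_zigzag_map_comulRight_mul F (σ.comp v) R.map_counitRight_PhiRhoInv,
    hF.mulMap_mul_map_PhiRho hv, Q.mulMap_zigzag_one_tmul_Phi_mul, map_mul, map_counitLeft_PhiRho,
    one_mul, Q.map_counitLeft_tensorOne, counitRight_coact]
  simp

end IsProjectionAlong

/-- The contraction `b ⊗ g ⊗ h ↦ E(b) v(g) ⊗ h`. -/
def smashContract (R : RightComoduleAlgebra Q.toQuasiBialgebra B) (v : H →ₐ[k] B) :
    B ⊗[k] (H ⊗[k] H) →ₗ[k] B ⊗[k] H :=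
  mulMap (Algebra.TensorProduct.includeLeft.toLinearMap ∘ₗ R.canonicalProjection v)
    (v ⊗ₐ AlgHom.id k H).toLinearMap

@[simp]
theorem smashContract_tmul (b : B) (g h : H) :
    R.smashContract v (b ⊗ₜ (g ⊗ₜ h)) = (R.canonicalProjection v b * v g) ⊗ₜ h := by
  simp [smashContract]

theorem smashContract_mul_one_tmul (z : B ⊗[k] (H ⊗[k] H)) (d : H ⊗[k] H) :
    R.smashContract v (z * 1 ⊗ₜ d) = R.smashContract v z * (v ⊗ₐ AlgHom.id k H) d := by
  simp only [smashContract, mulMap_mul_tmul, LinearMap.mulRight_one, LinearMap.comp_id]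

/-- The coaction `a ↦ (x¹ ▷ a) v(x²) ⊗ x³` of the smash product, transported to `B` and extended
to all of `B` by `b ↦ E(x_ρ¹ b) v(x_ρ²) ⊗ x_ρ³`. -/
def smashCoact (R : RightComoduleAlgebra Q.toQuasiBialgebra B) (v : H →ₐ[k] B) : B →ₗ[k] B ⊗[k] H :=
  R.smashContract v ∘ₗ LinearMap.mulLeft k R.PhiRhoInv ∘ₗ
    (Algebra.TensorProduct.includeLeft : B →ₐ[k] B ⊗[k] (H ⊗[k] H)).toLinearMap

theorem smashCoact_apply (b : B) :
    R.smashCoact v b = R.smashContract v (R.PhiRhoInv * b ⊗ₜ 1) := by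
  simp [smashCoact]

theorem smashContract_coactLeft_mul (t : B ⊗[k] H) (z : B ⊗[k] (H ⊗[k] H)) :
    R.smashContract v (R.coactLeft H t * z) = t * R.smashContract v z := by
  induction z using tensorProduct_induction₃ with
  | zero => simp
  | add x y hx hy => simp only [map_add, mul_add, hx, hy]
  | tmul b g g' =>
    induction t using TensorProduct.induction_on with
    | zero => simp
    | add x y hx hy => simp only [map_add, add_mul, hx, hy]
    | tmul c h =>
      have contract_assoc (s : B ⊗[k] H) : R.smashContract v
          (Algebra.TensorProduct.assoc k k k B H H (s ⊗ₜ h) * b ⊗ₜ (g ⊗ₜ g'))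
          = (mulMap (R.canonicalProjection v ∘ₗ LinearMap.mulRight k b) v.toLinearMap s
            * v g) ⊗ₜ (h * g') := by
        induction s using TensorProduct.induction_on with
        | zero => simp
        | tmul x y => simp [mul_assoc]
        | add x y hx hy => simp only [TensorProduct.add_tmul, map_add, add_mul, hx, hy]
      rw [coactLeft_tmul, contract_assoc, mulMap_canonicalProjection_coact]
      simp [mul_assoc]

theorem smashContract_map (hv : IsComodAlgMorphismFromH R v) (w : H ⊗[k] (H ⊗[k] H)) :
    R.smashContract v ((v ⊗ₐ AlgHom.id k (H ⊗[k] H)) w)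
      = (v ⊗ₐ AlgHom.id k H) (Q.counitLeft (H ⊗[k] H) w) := by
  induction w using tensorProduct_induction₃ with
  | zero => simp
  | add x y hx hy => simp only [map_add, hx, hy]
  | tmul a b c =>
    have projection_v : R.canonicalProjection v (v a) = Q.counit a • 1 := by
      simpa [canonicalProjection_one hv] using canonicalProjection_mul_apply hv 1 a
    simp [projection_v, TensorProduct.smul_tmul']

theorem smashCoact_one (hv : IsComodAlgMorphismFromH R v) : R.smashCoact v 1 = 1 := by
  rw [smashCoact_apply, ← Algebra.TensorProduct.one_def, mul_one, PhiRhoInv_eq R hv,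
    smashContract_map hv, Q.counitLeft_PhiInv, map_one]

theorem smashCoact_mul_apply (hv : IsComodAlgMorphismFromH R v) (b : B) (h : H) :
    R.smashCoact v (b * v h) = Q.counit h • R.smashCoact v b := by
  have smashContract_mul (z : B ⊗[k] (H ⊗[k] H)) :
      R.smashContract v (z * (b * v h) ⊗ₜ 1) = Q.counit h • R.smashContract v (z * b ⊗ₜ 1) := by
    induction z using tensorProduct_induction₃ with
    | zero => simp
    | add x y hx hy => simp only [map_add, add_mul, smul_add, hx, hy]
    | tmul c g g' =>
      simp [← mul_assoc, canonicalProjection_mul_apply hv, TensorProduct.smul_tmul',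
        Algebra.TensorProduct.one_def]
  simp only [smashCoact_apply, smashContract_mul]

theorem mulMap_smashCoact_coact (hv : IsComodAlgMorphismFromH R v) (c b : B) :
    mulMap (R.smashCoact v ∘ₗ LinearMap.mulRight k b) (R.coact.comp v).toLinearMap (R.coact c)
      = R.coact c * R.smashCoact v b := by
  have mulMap_eq (t : B ⊗[k] H) :
      mulMap (R.smashCoact v ∘ₗ LinearMap.mulRight k b) (R.coact.comp v).toLinearMap t
        = R.smashContract v (R.PhiRhoInv * Q.comulRight B t * b ⊗ₜ 1) := by
    induction t using TensorProduct.induction_on with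
    | zero => simp
    | add x y hx hy => simp only [map_add, add_mul, mul_add, hx, hy]
    | tmul x y =>
      have tmul_eq : Q.comulRight B (x ⊗ₜ y) * b ⊗ₜ 1 = (x * b) ⊗ₜ 1 * 1 ⊗ₜ Q.comul y := by
        simp
      rw [mul_assoc, tmul_eq, ← mul_assoc, smashContract_mul_one_tmul, ← hv.1, ← smashCoact_apply]
      simp
  rw [mulMap_eq, PhiRhoInv_mul_comulRight_coact, mul_assoc, smashContract_coactLeft_mul,
    smashCoact_apply]

theorem isProjectionAlong_smashCoact (hv : IsComodAlgMorphismFromH R v) :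
    IsProjectionAlong R v R.coact (R.smashCoact v) :=
  ⟨smashCoact_one hv, smashCoact_mul_apply hv, mulMap_smashCoact_coact hv⟩

theorem coact_canonicalProjection (hv : IsComodAlgMorphismFromH R v) (b : B) :
    R.coact (R.canonicalProjection v b) = R.smashCoact v b :=
  ((isProjectionAlong_smashCoact hv).eq_comp_canonicalProjection hv b).symm

end CanonicalProjection

end RightComoduleAlgebra

end

/-- `Ψ` intertwines the coactions: `ρ(a v(h)) = (x¹ ▷ a)v(x²h₁) ⊗ x³h₂` for `a` in the
coinvariants `A = E(B)`. -/
theorem statement15 {k H B : Type*} [Field k] [Ring H] [Algebra k H]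
    [Ring B] [Algebra k B] (Q : QuasiHopfAlgebra k H)
    (R : RightComoduleAlgebra Q.toQuasiBialgebra B)
    (v : H →ₐ[k] B) (hv : IsComodAlgMorphismFromH R v)
    (E : B →ₗ[k] B) (hE : IsCanonicalProjection Q R v E) :
    ∀ a ∈ LinearMap.range E, ∀ (h : H) (n : ℕ) (x1 x2 x3 : Fin n → H),
      Q.PhiInv = ∑ i, x1 i ⊗ₜ[k] (x2 i ⊗ₜ[k] x3 i) →
      ∀ (m : ℕ) (d1 d2 : Fin m → H), Q.comul h = ∑ j, d1 j ⊗ₜ[k] d2 j →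
      R.coact (a * v h)
        = ∑ i, ∑ j, (E (v (x1 i) * a) * v (x2 i * d1 j)) ⊗ₜ[k] (x3 i * d2 j) := by
  rintro _ ⟨b, rfl⟩ h n x1 x2 x3 hx m d1 d2 hd
  obtain rfl := hE.eq_canonicalProjection hv
  rw [map_mul, R.coact_canonicalProjection hv, hv.1, hd, R.smashCoact_apply, R.PhiRhoInv_eq hv, hx]
  simp only [map_sum, Finset.sum_mul, Finset.mul_sum, Algebra.TensorProduct.map_tmul,
    Algebra.TensorProduct.tmul_mul_tmul, RightComoduleAlgebra.smashContract_tmul, AlgHom.coe_id,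
    id_eq, mul_one, RightComoduleAlgebra.canonicalProjection_mul_canonicalProjection hv, map_mul,
    mul_assoc]
  rw [Finset.sum_comm]
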